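/- Let A and B be bounded self-adjoint operators on a complex Hilbert space H and let m ≥ 1. Define the operator-valued function G_m(s) = s^{2m−1} ∫_{‖ω‖≤1, ω∈ℝ^{2m}} cos(sω₁A/√m)·cos(sω₂B/√m)·cos(sω₃A/√m)⋯cos(sω_{2m−1}A/√m)·cos(sω_{2m}B/√m) · (1−‖ω‖²)^{−1/2} dω, and F_m(t) = (1/(2π)^m) · (D^{m−1}G_m)′(t). Then for every t > 0, F_m(t) = Σ_{n=0}^{∞} ((−1)^n t^{2n} / ((2n)! · m^n)) · Σ_{α∈ℕ^{2m}, |α|=n} (n!/α!) · A^{2α₁} B^{2α₂} A^{2α₃} ⋯ A^{2α_{2m−1}} B^{2α_{2m}}, the outer series converging absolutely in operator norm. -/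

import Mathlib

open MeasureTheory Real

/-- The operator `(Df)(t) = f'(t)/t` for functions with values in a real normed space. -/
noncomputable def Dop {F : Type*} [NormedAddCommGroup F] [NormedSpace ℝ F]
    (f : ℝ → F) : ℝ → F := fun t => t⁻¹ • deriv f t

/-- `cos (s • T)` defined by its norm-convergent power series
`∑ (-1)^k s^(2k) T^(2k) / (2k)!`. -/
noncomputable def cosOp {H : Type*} [NormedAddCommGroup H] [InnerProductSpace ℂ H]
    (s : ℝ) (T : H →L[ℂ] H) : H →L[ℂ] H :=
  ∑' k : ℕ, (((-1:ℝ)^k * s^(2*k)) / (Nat.factorial (2*k) : ℝ)) • T^(2*k)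

/-!
Write `S n` for the inner sum over `|α| = n`. In polar coordinates an even monomial integrates over
the unit ball against `(1 - ‖ω‖²) ^ (-1/2)` to its Gaussian integral, a product of values
`Γ (αᵢ + 1/2)`, times a quotient of Gamma values that depends only on `|α|`. Since
`Γ (k + 1/2) = (2k)! √π / (4 ^ k k!)`, the factorials `(2 αᵢ)!` of the cosine series cancel, and
integrating the product of these series termwise gives
`G s = √π ^ (2m + 1) ∑ s ^ (2n + 2m - 1) / Γ (n + m + 1/2) • v n` with
`v n = (-1 / (4m)) ^ n / n! • S n`. The operator `D` lowers the exponent by two and the argument of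
`Γ` by one, at the cost of a factor two, exactly as for Bessel functions. After `D ^ (m - 1)` and a
last derivative the coefficients are those of `∑ t ^ (2n) / Γ (n + 1/2) • v n`, and the formula for
`Γ (n + 1/2)` turns these into the claimed ones.
-/

section HomogeneousIntegrals

open Set

lemma integral_Ioi_pow_mul_exp_neg_sq (k : ℕ) :
    ∫ x in Ioi (0 : ℝ), x ^ k * exp (-x ^ 2) = Gamma ((k + 1) / 2) / 2 := by
  have h := integral_rpow_mul_exp_neg_rpow two_pos (neg_one_lt_zero.trans_le k.cast_nonneg)
  simpa [inv_mul_eq_div] using h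

lemma integral_even_pow_mul_exp_neg_sq (k : ℕ) :
    ∫ x : ℝ, x ^ (2 * k) * exp (-x ^ 2) = Gamma (k + 1 / 2) := by
  have h := integral_comp_abs (f := fun x : ℝ => x ^ (2 * k) * exp (-x ^ 2))
  simp only [sq_abs, (even_two_mul k).pow_abs] at h
  rw [h, integral_Ioi_pow_mul_exp_neg_sq, mul_div_cancel₀ _ two_ne_zero]
  push_cast
  ring_nf

lemma integral_rpow_mul_one_sub_rpow {a b : ℝ} (ha : 0 < a) (hb : 0 < b) :
    ∫ x in (0 : ℝ)..1, x ^ (a - 1) * (1 - x) ^ (b - 1) = Gamma a * Gamma b / Gamma (a + b) := by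
  have h := ProbabilityTheory.beta_eq_betaIntegralReal a b ha hb
  rw [ProbabilityTheory.beta] at h
  rw [h, Complex.betaIntegral, ← Complex.ofReal_re (∫ x in (0 : ℝ)..1, _),
    ← intervalIntegral.integral_ofReal]
  refine congrArg Complex.re (intervalIntegral.integral_congr fun x hx => ?_)
  rw [uIcc_of_le zero_le_one] at hx
  push_cast [Complex.ofReal_cpow hx.1, Complex.ofReal_cpow (sub_nonneg.2 hx.2)]
  rfl

lemma integral_Ioc_pow_mul_one_sub_sq_rpow (k : ℕ) {p : ℝ} (hp : -1 < p) :
    ∫ r in Ioc (0 : ℝ) 1, r ^ k * (1 - r ^ 2) ^ p =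
      Gamma ((k + 1) / 2) * Gamma (p + 1) / Gamma ((k + 1) / 2 + (p + 1)) / 2 := by
  have h := integral_comp_rpow_Ioi_of_pos (p := 2)
    (g := (Ioc (0 : ℝ) 1).indicator fun x => x ^ (((k : ℝ) + 1) / 2 - 1) * (1 - x) ^ (p + 1 - 1))
    two_pos
  rw [setIntegral_indicator measurableSet_Ioc, inter_eq_self_of_subset_right Ioc_subset_Ioi_self,
    ← intervalIntegral.integral_of_le zero_le_one,
    integral_rpow_mul_one_sub_rpow (by positivity) (by linarith)] at h
  have hind : ∫ r in Ioc (0 : ℝ) 1, r ^ k * (1 - r ^ 2) ^ p * 2 =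
      ∫ r in Ioi 0, (Ioc (0 : ℝ) 1).indicator (fun r => r ^ k * (1 - r ^ 2) ^ p * 2) r := by
    rw [setIntegral_indicator measurableSet_Ioc, inter_eq_self_of_subset_right Ioc_subset_Ioi_self]
  rw [← h, eq_div_iff two_ne_zero, ← integral_mul_const, hind]
  refine setIntegral_congr_fun measurableSet_Ioi fun r (hr : 0 < r) => ?_
  have hpow : (r ^ (2 : ℝ)) ^ (((k : ℝ) + 1) / 2 - 1) * r = r ^ k := by
    rw [← rpow_mul hr.le, ← rpow_add_one hr.ne', ← rpow_natCast]
    ring_nf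
  have hmem : r ^ (2 : ℝ) ∈ Ioc (0 : ℝ) 1 ↔ r ∈ Ioc (0 : ℝ) 1 := by
    simp [hr, sq_le_one_iff₀ hr.le]
  by_cases hr1 : r ∈ Ioc (0 : ℝ) 1
  · rw [indicator_of_mem hr1, indicator_of_mem (hmem.2 hr1), ← hpow]
    rw [show (2 : ℝ) - 1 = 1 by norm_num, rpow_one, rpow_two, add_sub_cancel_right, smul_eq_mul]
    ring
  · rw [indicator_of_notMem hr1, indicator_of_notMem (mt hmem.1 hr1), smul_zero]

section Polar

variable {E : Type*} [NormedAddCommGroup E] [NormedSpace ℝ E] [MeasurableSpace E] [BorelSpace E]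
  [Nontrivial E] [FiniteDimensional ℝ E] (μ : Measure E) [μ.IsAddHaarMeasure]
  {f : E → ℝ} {j : ℕ}

lemma integral_homogeneous_mul_radial
    (hf : ∀ r : ℝ, 0 < r → ∀ x, f (r • x) = r ^ j * f x) (h : ℝ → ℝ) :
    ∫ x, f x * h ‖x‖ ∂μ =
      (∫ u : Metric.sphere (0 : E) 1, f u ∂μ.toSphere) *
        ∫ r in Ioi (0 : ℝ), r ^ (Module.finrank ℝ E - 1 + j) * h r := by
  calc
    ∫ x, f x * h ‖x‖ ∂μ = ∫ x : ({(0)}ᶜ : Set E), f x.1 * h ‖x.1‖ ∂(μ.comap (↑)) := by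
      rw [integral_subtype_comap (measurableSet_singleton _).compl fun x => f x * h ‖x‖,
        restrict_compl_singleton]
    _ = ∫ p : Metric.sphere (0 : E) 1 × Ioi (0 : ℝ), f p.1 * (p.2.1 ^ j * h p.2)
          ∂μ.toSphere.prod (.volumeIoiPow (Module.finrank ℝ E - 1)) := by
      rw [← μ.measurePreserving_homeomorphUnitSphereProd.integral_comp
        (Homeomorph.measurableEmbedding _)]
      refine integral_congr_ae (.of_forall fun x => ?_)
      have hx : 0 < ‖x.1‖ := norm_pos_iff.2 x.2
      have hfx : f x.1 = ‖x.1‖ ^ j * f (‖x.1‖⁻¹ • x.1) := by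
        rw [← hf _ hx, smul_smul, mul_inv_cancel₀ hx.ne', one_smul]
      simp only [homeomorphUnitSphereProd_apply_snd_coe, homeomorphUnitSphereProd_apply_fst_coe]
      rw [hfx]
      ring
    _ = (∫ u : Metric.sphere (0 : E) 1, f u ∂μ.toSphere) *
          ∫ x : Ioi (0 : ℝ), x.1 ^ j * h x ∂.volumeIoiPow (Module.finrank ℝ E - 1) :=
      integral_prod_mul (fun u : Metric.sphere (0 : E) 1 => f u)
        (fun x : Ioi (0 : ℝ) => x.1 ^ j * h x)
    _ = _ := by
      congr 1
      simp only [Measure.volumeIoiPow, ENNReal.ofReal]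
      rw [integral_withDensity_eq_integral_smul,
        integral_subtype_comap measurableSet_Ioi fun a ↦
          Real.toNNReal (a ^ (Module.finrank ℝ E - 1)) • (a ^ j * h a),
        setIntegral_congr_fun measurableSet_Ioi fun x hx => ?_]
      · rw [NNReal.smul_def, Real.coe_toNNReal _ (pow_nonneg hx.out.le _), smul_eq_mul]
        ring
      · exact (measurable_subtype_coe.pow_const _).real_toNNReal

-- In polar coordinates both sides contain the same integral of `f` over the sphere.
lemma setIntegral_closedBall_homogeneous_mul_one_sub_norm_sq_rpow
    (hf : ∀ r : ℝ, 0 < r → ∀ x, f (r • x) = r ^ j * f x) {p : ℝ} (hp : -1 < p) :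
    ∫ x in Metric.closedBall 0 1, f x * (1 - ‖x‖ ^ 2) ^ p ∂μ =
      (∫ x, f x * exp (-‖x‖ ^ 2) ∂μ) *
        (Gamma (p + 1) / Gamma ((Module.finrank ℝ E + j) / 2 + (p + 1))) := by
  have hexp := integral_homogeneous_mul_radial μ hf fun r => exp (-r ^ 2)
  have hball := integral_homogeneous_mul_radial μ hf
    ((Iic (1 : ℝ)).indicator fun r => (1 - r ^ 2) ^ p)
  have hradial (k : ℕ) :
      ∫ r in Ioi (0 : ℝ), r ^ k * (Iic (1 : ℝ)).indicator (fun r => (1 - r ^ 2) ^ p) r =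
        ∫ r in Ioc (0 : ℝ) 1, r ^ k * (1 - r ^ 2) ^ p := by
    rw [← Ioi_inter_Iic, ← setIntegral_indicator measurableSet_Iic]
    simp only [indicator_mul_right]
  have hdim : ((Module.finrank ℝ E - 1 + j : ℕ) : ℝ) + 1 = Module.finrank ℝ E + j := by
    have := Module.finrank_pos (R := ℝ) (M := E)
    rw [← Nat.cast_add_one, ← Nat.cast_add]
    congr 1
    omega
  rw [hradial, integral_Ioc_pow_mul_one_sub_sq_rpow _ hp, hdim] at hball
  rw [integral_Ioi_pow_mul_exp_neg_sq, hdim] at hexp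
  calc
    _ = ∫ x, f x * (Iic (1 : ℝ)).indicator (fun r => (1 - r ^ 2) ^ p) ‖x‖ ∂μ := by
      rw [← integral_indicator Metric.isClosed_closedBall.measurableSet]
      refine integral_congr_ae (.of_forall fun x => ?_)
      by_cases hx : ‖x‖ ≤ 1 <;> simp [hx]
    _ = _ := by
      rw [hball, hexp]
      ring

end Polar

section EvenMonomials

variable {ι : Type*} [Fintype ι] (α : ι → ℕ)

lemma integral_even_monomial_mul_exp_neg_norm_sq :
    ∫ x : EuclideanSpace ℝ ι, (∏ i, x i ^ (2 * α i)) * exp (-‖x‖ ^ 2) =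
      ∏ i, Gamma (α i + 1 / 2) := by
  rw [← (PiLp.volume_preserving_toLp ι).integral_comp
    (MeasurableEquiv.toLp 2 _).measurableEmbedding]
  simp only [EuclideanSpace.norm_sq_eq, norm_eq_abs, sq_abs, ← Finset.sum_neg_distrib, exp_sum,
    ← Finset.prod_mul_distrib]
  rw [integral_fintype_prod_volume_eq_prod fun i (x : ℝ) => x ^ (2 * α i) * exp (-x ^ 2)]
  simp only [integral_even_pow_mul_exp_neg_sq]

lemma norm_even_monomial_mul_one_sub_norm_sq_rpow_le (p : ℝ) {x : EuclideanSpace ℝ ι}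
    (hx : x ∈ Metric.closedBall 0 1) :
    ‖(∏ i, x i ^ (2 * α i)) * (1 - ‖x‖ ^ 2) ^ p‖ ≤ (1 - ‖x‖ ^ 2) ^ p := by
  rw [mem_closedBall_zero_iff] at hx
  have hweight : 0 ≤ (1 - ‖x‖ ^ 2) ^ p :=
    rpow_nonneg (sub_nonneg.2 (pow_le_one₀ (norm_nonneg x) hx)) p
  have hmonomial : ‖∏ i, x i ^ (2 * α i)‖ ≤ 1 := by
    rw [norm_prod]
    refine Finset.prod_le_one (fun _ _ => norm_nonneg _) fun i _ => ?_
    rw [norm_pow]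
    exact pow_le_one₀ (norm_nonneg _) ((PiLp.norm_apply_le x i).trans hx)
  rw [norm_mul, norm_of_nonneg hweight]
  exact mul_le_of_le_one_left hweight hmonomial

variable [Nonempty ι] {p : ℝ}

lemma setIntegral_closedBall_even_monomial (hp : -1 < p) :
    ∫ x in Metric.closedBall (0 : EuclideanSpace ℝ ι) 1,
        (∏ i, x i ^ (2 * α i)) * (1 - ‖x‖ ^ 2) ^ p =
      (∏ i, Gamma (α i + 1 / 2)) *
        (Gamma (p + 1) / Gamma ((∑ i, α i : ℕ) + Fintype.card ι / 2 + (p + 1))) := by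
  have hom (r : ℝ) (_ : 0 < r) (x : EuclideanSpace ℝ ι) :
      ∏ i, (r • x) i ^ (2 * α i) = r ^ (2 * ∑ i, α i) * ∏ i, x i ^ (2 * α i) := by
    simp only [PiLp.smul_apply, smul_eq_mul, mul_pow, Finset.prod_mul_distrib,
      Finset.prod_pow_eq_pow_sum, ← Finset.mul_sum]
  rw [setIntegral_closedBall_homogeneous_mul_one_sub_norm_sq_rpow volume hom hp,
    integral_even_monomial_mul_exp_neg_norm_sq, finrank_euclideanSpace]
  congr 4
  push_cast
  ring

lemma integrableOn_closedBall_even_monomial (hp : -1 < p) :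
    IntegrableOn (fun x : EuclideanSpace ℝ ι => (∏ i, x i ^ (2 * α i)) * (1 - ‖x‖ ^ 2) ^ p)
      (Metric.closedBall 0 1) := by
  refine .of_integral_ne_zero ?_
  rw [setIntegral_closedBall_even_monomial α hp]
  have hprod : 0 < ∏ i, Gamma (α i + 1 / 2) :=
    Finset.prod_pos fun i _ => Gamma_pos_of_pos (by positivity)
  have hp' : 0 < p + 1 := by linarith
  have hnum : 0 < Gamma (p + 1) := Gamma_pos_of_pos hp'
  have hden : 0 < Gamma ((∑ i, α i : ℕ) + Fintype.card ι / 2 + (p + 1)) :=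
    Gamma_pos_of_pos (by positivity)
  exact (mul_pos hprod (div_pos hnum hden)).ne'

lemma hasSum_setIntegral_closedBall_even_power_series {F : Type*} [NormedAddCommGroup F]
    [NormedSpace ℝ F] [CompleteSpace F] {c : (ι → ℕ) → F} (hc : Summable fun α => ‖c α‖)
    {f : EuclideanSpace ℝ ι → F} (hf : ∀ x, HasSum (fun α => (∏ i, x i ^ (2 * α i)) • c α) (f x))
    (hp : -1 < p) :
    HasSum (fun α => ((∏ i, Gamma (α i + 1 / 2)) *
        (Gamma (p + 1) / Gamma ((∑ i, α i : ℕ) + Fintype.card ι / 2 + (p + 1)))) • c α)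
      (∫ x in Metric.closedBall 0 1, (1 - ‖x‖ ^ 2) ^ p • f x) := by
  have hint (α : ι → ℕ) := integrableOn_closedBall_even_monomial α hp
  have hbound (α : ι → ℕ) : ∀ᵐ x ∂volume.restrict (Metric.closedBall (0 : EuclideanSpace ℝ ι) 1),
      ‖((∏ i, x i ^ (2 * α i)) * (1 - ‖x‖ ^ 2) ^ p) • c α‖ ≤ (1 - ‖x‖ ^ 2) ^ p * ‖c α‖ :=
    (ae_restrict_mem Metric.isClosed_closedBall.measurableSet).mono fun x hx => by
      rw [norm_smul]
      exact mul_le_mul_of_nonneg_right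
        (norm_even_monomial_mul_one_sub_norm_sq_rpow_le α p hx) (norm_nonneg _)
  have hweight : IntegrableOn (fun x : EuclideanSpace ℝ ι => (1 - ‖x‖ ^ 2) ^ p)
      (Metric.closedBall 0 1) := by
    simpa using hint 0
  simp only [← setIntegral_closedBall_even_monomial _ hp, ← integral_smul_const]
  refine hasSum_integral_of_dominated_convergence _
    (fun α => ((hint α).smul_const (c α)).aestronglyMeasurable) hbound
    (.of_forall fun x => hc.mul_left _) ?_ (.of_forall fun x => ?_)
  · simp only [tsum_mul_left]
    exact hweight.mul_const _
  · simp only [mul_comm (∏ _, _), mul_smul]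
    exact (hf x).const_smul _

end EvenMonomials

end HomogeneousIntegrals

section EntireSeries

variable {F : Type*} [NormedAddCommGroup F]

/-- The vectors `v n` are the coefficients of an everywhere absolutely convergent power series
`∑ zⁿ v n`. -/
def IsEntireSeries (v : ℕ → F) : Prop :=
  ∀ r : ℝ, 0 ≤ r → Summable fun n => r ^ n * ‖v n‖

variable [NormedSpace ℝ F] {v : ℕ → F}

/-- The vector-valued analogue of `2 ^ ν * s ^ ν * J_ν s`, where `J_ν` is the Bessel function of
order `ν = k / 2`; that function is the case of the scalars `v n = (-1 / 4) ^ n / n!`. General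
vectors `v n` keep the recurrence `(s ^ ν * J_ν)' / s = s ^ (ν - 1) * J_(ν - 1)`. -/
noncomputable def besselSeries (v : ℕ → F) (k : ℕ) (s : ℝ) : F :=
  ∑' n : ℕ, (s ^ (2 * n + k) / Gamma (n + (k / 2 + 1))) • v n

lemma IsEntireSeries.summable_norm_div_Gamma_smul (hv : IsEntireSeries v) {c : ℝ} (hc : 0 < c)
    (s : ℝ) (k : ℕ) : Summable fun n : ℕ => ‖(s ^ (2 * n + k) / Gamma (n + c)) • v n‖ := by
  obtain ⟨x, hx, hmin⟩ := exists_isMinOn_Gamma_Ioi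
  have hΓx : 0 < Gamma x := Gamma_pos_of_pos (by linarith [hx.1])
  refine .of_nonneg_of_le (fun _ => norm_nonneg _) (fun n => ?_)
    ((hv (s ^ 2) (sq_nonneg s)).mul_left (|s| ^ k / Gamma x))
  have hn : 0 < n + c := by positivity
  have hle : Gamma x ≤ Gamma (n + c) := hmin hn
  calc ‖(s ^ (2 * n + k) / Gamma (n + c)) • v n‖
      = |s| ^ k * (s ^ 2) ^ n / Gamma (n + c) * ‖v n‖ := by
        rw [norm_smul, norm_div, norm_pow, norm_eq_abs, norm_of_nonneg (hΓx.le.trans hle),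
          pow_add, pow_mul, sq_abs, mul_comm (|s| ^ k)]
    _ ≤ |s| ^ k * (s ^ 2) ^ n / Gamma x * ‖v n‖ := by gcongr
    _ = |s| ^ k / Gamma x * ((s ^ 2) ^ n * ‖v n‖) := by ring

lemma hasDerivAt_pow_div_Gamma (n k : ℕ) (s : ℝ) :
    HasDerivAt (fun s : ℝ => s ^ (2 * n + (k + 1)) / Gamma (n + ((k + 1 : ℕ) / 2 + 1)))
      (2 * (s ^ (2 * n + k) / Gamma (n + (k + 1) / 2))) s := by
  have hpos : (0 : ℝ) < n + (k + 1) / 2 := by positivity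
  have hΓ : Gamma (n + ((k + 1 : ℕ) / 2 + 1)) =
      (n + (k + 1) / 2) * Gamma (n + (k + 1) / 2) := by
    rw [← Gamma_add_one hpos.ne']
    push_cast
    ring_nf
  rw [hΓ]
  refine ((hasDerivAt_pow (2 * n + (k + 1)) s).div_const _).congr_deriv ?_
  push_cast
  rw [show 2 * n + (k + 1) - 1 = 2 * n + k by omega]
  field_simp [(Gamma_pos_of_pos hpos).ne']

lemma Dop_const_smul (c : ℝ) (f : ℝ → F) : Dop (c • f) = c • Dop f := by
  ext t
  simp only [Dop, Pi.smul_apply, deriv_const_smul_field, smul_comm c]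

lemma iterate_Dop_const_smul (c : ℝ) (f : ℝ → F) (j : ℕ) : Dop^[j] (c • f) = c • Dop^[j] f :=
  Function.Commute.iterate_left (Dop_const_smul c) j f

lemma eqOn_Dop {f g : ℝ → F} {U : Set ℝ} (h : Set.EqOn f g U) (hU : IsOpen U) :
    Set.EqOn (Dop f) (Dop g) U := fun t ht => by
  simp only [Dop, (h.eventuallyEq_of_mem (hU.mem_nhds ht)).deriv_eq]

variable [CompleteSpace F]

lemma hasDerivAt_besselSeries_succ (hv : IsEntireSeries v) (k : ℕ) (s : ℝ) :
    HasDerivAt (besselSeries v (k + 1))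
      ((2 : ℝ) • ∑' n : ℕ, (s ^ (2 * n + k) / Gamma (n + (k + 1) / 2)) • v n) s := by
  have hpos : (0 : ℝ) < (k + 1) / 2 := by positivity
  rw [← tsum_const_smul'']
  simp only [smul_smul]
  refine hasDerivAt_tsum_of_isPreconnected (t := Metric.ball (0 : ℝ) (|s| + 1)) (y₀ := s)
    (g := fun (n : ℕ) (s : ℝ) =>
      (s ^ (2 * n + (k + 1)) / Gamma (n + ((k + 1 : ℕ) / 2 + 1))) • v n)
    (((hv.summable_norm_div_Gamma_smul hpos (|s| + 1) k).mul_left 2))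
    Metric.isOpen_ball (convex_ball 0 _).isPreconnected
    (fun n y _ => (hasDerivAt_pow_div_Gamma n k y).smul_const (v n)) (fun n y hy => ?_)
    (by simp) (hv.summable_norm_div_Gamma_smul (by positivity) s (k + 1)).of_norm (by simp)
  have hy' : |y| ≤ |(|s| + 1)| := by
    rw [mem_ball_zero_iff, norm_eq_abs] at hy
    exact hy.le.trans (le_abs_self _)
  rw [mul_smul, norm_smul, norm_two, norm_smul, norm_smul, norm_div, norm_div, norm_pow, norm_pow,
    norm_eq_abs y, norm_eq_abs (|s| + 1)]
  gcongr

lemma Dop_besselSeries (hv : IsEntireSeries v) (k : ℕ) {s : ℝ} (hs : s ≠ 0) :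
    Dop (besselSeries v (k + 2)) s = (2 : ℝ) • besselSeries v k s := by
  rw [Dop, (hasDerivAt_besselSeries_succ hv (k + 1) s).deriv, smul_comm, besselSeries,
    ← tsum_const_smul'' s⁻¹]
  congr! 3 with n
  rw [smul_smul, ← add_assoc, pow_succ]
  push_cast
  field_simp
  ring_nf

lemma iterate_Dop_besselSeries (hv : IsEntireSeries v) (j k : ℕ) :
    Set.EqOn (Dop^[j] (besselSeries v (2 * j + k))) ((2 : ℝ) ^ j • besselSeries v k) {0}ᶜ := by
  induction j generalizing k with
  | zero => simp [Set.eqOn_refl]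
  | succ j ih =>
    intro s hs
    rw [show 2 * (j + 1) + k = 2 * j + (k + 2) by ring, Function.iterate_succ_apply',
      eqOn_Dop (ih (k + 2)) isOpen_compl_singleton hs, Dop_const_smul, Pi.smul_apply,
      Dop_besselSeries hv k hs, smul_smul, pow_succ, Pi.smul_apply]

lemma deriv_iterate_Dop_besselSeries (hv : IsEntireSeries v) (j : ℕ) {t : ℝ} (ht : t ≠ 0) :
    deriv (Dop^[j] (besselSeries v (2 * j + 1))) t =
      (2 : ℝ) ^ (j + 1) • ∑' n : ℕ, (t ^ (2 * n) / Gamma (n + 1 / 2)) • v n := by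
  have hD := (iterate_Dop_besselSeries hv j 1).eventuallyEq_of_mem
    (isOpen_compl_singleton.mem_nhds ht)
  rw [hD.deriv_eq, deriv_const_smul_field, (hasDerivAt_besselSeries_succ hv 0 t).deriv, smul_smul,
    ← pow_succ]
  simp

end EntireSeries

lemma Gamma_nat_add_half_eq_factorial (k : ℕ) :
    Gamma (k + 1 / 2) = (2 * k).factorial / (4 ^ k * k.factorial) * √π := by
  have hfac : (2 * k).factorial = 2 ^ k * k.factorial * (2 * k - 1).doubleFactorial := by
    cases k with
    | zero => simp
    | succ k => rw [← Nat.doubleFactorial_two_mul, mul_add_one,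
        Nat.factorial_eq_mul_doubleFactorial, Nat.add_sub_cancel_right (2 * k + 1) 1]
  have hpow : (4 : ℝ) ^ k = 2 ^ k * 2 ^ k := by
    rw [← mul_pow]
    norm_num
  rw [Real.Gamma_nat_add_half, hfac, hpow]
  push_cast
  field_simp

lemma hasSum_sum_antidiagonalTuple {F : Type*} [AddCommMonoid F] [TopologicalSpace F]
    [ContinuousAdd F] [RegularSpace F] {d : ℕ} {f : (Fin d → ℕ) → F} {a : F} (hf : HasSum f a) :
    HasSum (fun n => ∑ α ∈ Finset.Nat.antidiagonalTuple d n, f α) a := by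
  have hσ := (Finset.Nat.sigmaAntidiagonalTupleEquivTuple d).hasSum_iff.2 hf
  exact hσ.sigma fun n => Finset.hasSum _ f

section OrderedProducts

lemma prod_ofFn_smul {S R : Type*} [CommMonoid S] [Monoid R] [MulAction S R] [IsScalarTower S R R]
    [SMulCommClass S R R] :
    ∀ {d : ℕ} (c : Fin d → S) (x : Fin d → R),
      (List.ofFn fun i => c i • x i).prod = (∏ i, c i) • (List.ofFn x).prod
  | 0, _, _ => by simp
  | d + 1, c, x => by
    rw [List.ofFn_succ, List.prod_cons, prod_ofFn_smul, List.ofFn_succ, List.prod_cons,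
      Fin.prod_univ_succ, smul_mul_smul_comm]

variable {R : Type*} [NormedRing R]

lemma summable_norm_prod_ofFn :
    ∀ {d : ℕ} {f : Fin d → ℕ → R}, (∀ i, Summable fun k => ‖f i k‖) →
      Summable fun α : Fin d → ℕ => ‖(List.ofFn fun i => f i (α i)).prod‖
  | 0, _, _ => .of_finite
  | d + 1, f, hf => by
    rw [← (Fin.consEquiv fun _ : Fin (d + 1) => ℕ).summable_iff]
    simpa [Function.comp_def, Fin.consEquiv] using
      (hf 0).mul_norm (summable_norm_prod_ofFn fun i => hf i.succ)

lemma prod_ofFn_tsum [CompleteSpace R] :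
    ∀ {d : ℕ} {f : Fin d → ℕ → R}, (∀ i, Summable fun k => ‖f i k‖) →
      (List.ofFn fun i => ∑' k, f i k).prod =
        ∑' α : Fin d → ℕ, (List.ofFn fun i => f i (α i)).prod
  | 0, _, _ => by simp [tsum_fintype]
  | d + 1, f, hf => by
    rw [← (Fin.consEquiv fun _ : Fin (d + 1) => ℕ).tsum_eq, List.ofFn_succ, List.prod_cons,
      prod_ofFn_tsum fun i => hf i.succ,
      tsum_mul_tsum_of_summable_norm (hf 0) (summable_norm_prod_ofFn fun i => hf i.succ)]
    simp [Fin.consEquiv]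

end OrderedProducts

section CosineProducts

variable {R : Type*} [NormedRing R] [NormedAlgebra ℝ R] {d : ℕ}

/-- The `k`-th term of the power series of `cos (s • T)`. -/
noncomputable def cosTerm (s : ℝ) (T : R) (k : ℕ) : R :=
  (((-1 : ℝ) ^ k * s ^ (2 * k)) / (Nat.factorial (2 * k) : ℝ)) • T ^ (2 * k)

/-- `cos (s • T)` in a Banach algebra, by its power series; for bounded operators on a Hilbert
space this is `cosOp`. -/
noncomputable def cosSeries (s : ℝ) (T : R) : R := ∑' k : ℕ, cosTerm s T k

/-- The sum over `|α| = n` of `n! / α!` times the product of the `T i ^ (2 * α i)` in the order of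
the indices; for commuting `T i` it is `(∑ i, T i ^ 2) ^ n`. -/
noncomputable def evenMultinomial (T : Fin d → R) (n : ℕ) : R :=
  ∑ α ∈ Finset.Nat.antidiagonalTuple d n,
    ((Nat.factorial n : ℝ) / (∏ i, (Nat.factorial (α i) : ℝ))) •
      (List.ofFn fun i => T i ^ (2 * α i)).prod

lemma pow_div_factorial_smul_evenMultinomial (a : ℝ) (T : Fin d → R) (n : ℕ) :
    (a ^ n / n.factorial) • evenMultinomial T n =
      ∑ α ∈ Finset.Nat.antidiagonalTuple d n,
        (List.ofFn fun i => (a ^ α i / (α i).factorial) • T i ^ (2 * α i)).prod := by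
  rw [evenMultinomial, Finset.smul_sum]
  refine Finset.sum_congr rfl fun α hα => ?_
  rw [prod_ofFn_smul, smul_smul, Finset.prod_div_distrib, Finset.prod_pow_eq_pow_sum,
    Finset.Nat.mem_antidiagonalTuple.1 hα, div_mul_div_cancel₀ (by positivity)]

lemma isEntireSeries_evenMultinomial (a : ℝ) (T : Fin d → R) :
    IsEntireSeries fun n => (a ^ n / n.factorial : ℝ) • evenMultinomial T n := by
  intro r hr
  have hexp (i : Fin d) :
      Summable fun k => ‖((r * a) ^ k / k.factorial) • T i ^ (2 * k)‖ := by
    refine (NormedSpace.norm_expSeries_summable' (𝕂 := ℝ) ((r * a) • T i ^ 2)).congr fun k => ?_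
    rw [smul_pow, smul_smul, pow_mul, inv_mul_eq_div]
  refine .of_nonneg_of_le (fun n => by positivity) (fun n => ?_)
    (hasSum_sum_antidiagonalTuple (summable_norm_prod_ofFn hexp).hasSum).summable
  rw [← norm_of_nonneg (pow_nonneg hr n), ← norm_smul, smul_smul, ← mul_div_assoc, ← mul_pow,
    pow_div_factorial_smul_evenMultinomial]
  exact norm_sum_le _ _

lemma summable_norm_cosTerm (s : ℝ) (T : R) : Summable fun k => ‖cosTerm s T k‖ := by
  refine ((NormedSpace.norm_expSeries_summable' (𝕂 := ℝ) (s • T)).comp_injective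
    (mul_right_injective₀ (two_ne_zero' ℕ))).congr fun k => ?_
  simp only [Function.comp_apply, cosTerm, smul_pow, smul_smul, norm_smul, norm_mul, norm_div,
    norm_pow, norm_neg, norm_one, one_pow, one_mul, inv_mul_eq_div]

lemma prod_Gamma_smul_prod_cosTerm (T : Fin d → R) (s : ℝ) (α : Fin d → ℕ) :
    (∏ i, Gamma (α i + 1 / 2)) • (List.ofFn fun i => cosTerm s (T i) (α i)).prod =
      √π ^ d • (List.ofFn fun i =>
        ((-s ^ 2 / 4) ^ α i / (α i).factorial) • T i ^ (2 * α i)).prod := by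
  have hπ : √π ^ d = ∏ _i : Fin d, √π := by simp
  rw [hπ, ← prod_ofFn_smul, ← prod_ofFn_smul]
  congr! 3 with i
  rw [cosTerm, smul_smul, smul_smul, Gamma_nat_add_half_eq_factorial]
  congr 1
  rw [pow_mul, div_pow, neg_pow (s ^ 2)]
  field_simp

variable [CompleteSpace R]

lemma hasSum_prod_cosSeries (T : Fin d → R) (s : ℝ) (x : Fin d → ℝ) :
    HasSum (fun α : Fin d → ℕ =>
        (∏ i, x i ^ (2 * α i)) • (List.ofFn fun i => cosTerm s (T i) (α i)).prod)
      (List.ofFn fun i => cosSeries (s * x i) (T i)).prod := by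
  have hterm (α : Fin d → ℕ) :
      (∏ i, x i ^ (2 * α i)) • (List.ofFn fun i => cosTerm s (T i) (α i)).prod =
        (List.ofFn fun i => cosTerm (s * x i) (T i) (α i)).prod := by
    rw [← prod_ofFn_smul]
    congr! 3 with i
    rw [cosTerm, cosTerm, smul_smul, mul_pow]
    ring_nf
  have hsum (i : Fin d) := summable_norm_cosTerm (s * x i) (T i)
  simp only [hterm, cosSeries]
  rw [prod_ofFn_tsum hsum]
  exact (summable_norm_prod_ofFn hsum).of_norm.hasSum

lemma hasSum_setIntegral_closedBall_prod_cosSeries [NeZero d] (T : Fin d → R) (s : ℝ) {p : ℝ}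
    (hp : -1 < p) :
    HasSum (fun n : ℕ => (√π ^ d * Gamma (p + 1) / Gamma (n + d / 2 + (p + 1))) •
        ((-s ^ 2 / 4) ^ n / n.factorial : ℝ) • evenMultinomial T n)
      (∫ ω in Metric.closedBall (0 : EuclideanSpace ℝ (Fin d)) 1,
        (1 - ‖ω‖ ^ 2) ^ p • (List.ofFn fun i => cosSeries (s * ω i) (T i)).prod) := by
  have hcos := summable_norm_prod_ofFn fun i => summable_norm_cosTerm s (T i)
  have hsum := hasSum_setIntegral_closedBall_even_power_series hcos
    (fun ω => hasSum_prod_cosSeries T s ω) hp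
  refine (hasSum_sum_antidiagonalTuple hsum).congr_fun fun n => ?_
  rw [pow_div_factorial_smul_evenMultinomial, Finset.smul_sum]
  refine Finset.sum_congr rfl fun α hα => ?_
  rw [mul_comm (∏ i, _), mul_smul, prod_Gamma_smul_prod_cosTerm, smul_smul, Fintype.card_fin,
    Finset.Nat.mem_antidiagonalTuple.1 hα, div_mul_eq_mul_div, mul_comm (√π ^ d)]

lemma pow_smul_setIntegral_closedBall_prod_cosSeries [NeZero d] (T : Fin d → R) {c : ℝ}
    (hc : 0 < c) (s : ℝ) :
    s ^ (d - 1) • ∫ ω in Metric.closedBall (0 : EuclideanSpace ℝ (Fin d)) 1,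
        ((1 - ‖ω‖ ^ 2) ^ (-(1 : ℝ) / 2)) •
          (List.ofFn fun i => cosSeries (s * ω i / √c) (T i)).prod =
      √π ^ (d + 1) • besselSeries
        (fun n => ((-(4 * c)⁻¹) ^ n / n.factorial : ℝ) • evenMultinomial T n) (d - 1) s := by
  have hd : ((d - 1 : ℕ) : ℝ) = d - 1 := by
    rw [Nat.cast_sub NeZero.one_le, Nat.cast_one]
  have hp : -(1 : ℝ) / 2 + 1 = 1 / 2 := by norm_num
  have hint := (hasSum_setIntegral_closedBall_prod_cosSeries T (s / √c)
    (p := -(1 : ℝ) / 2) (by norm_num)).tsum_eq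
  simp only [← mul_div_right_comm] at hint
  rw [← hint, besselSeries, ← tsum_const_smul'', ← tsum_const_smul'', hp, Gamma_one_half_eq]
  congr! 2 with n
  have hΓ : (n : ℝ) + d / 2 + 1 / 2 = n + ((d - 1 : ℕ) / 2 + 1) := by
    rw [hd]
    ring
  have hpow : (-(s / √c) ^ 2 / 4) ^ n = s ^ (2 * n) * (-(4 * c)⁻¹) ^ n := by
    rw [div_pow s, sq_sqrt hc.le, pow_mul, ← mul_pow]
    congr 1
    field_simp
  simp only [smul_smul]
  rw [hΓ, hpow]
  congr 1
  ring

end CosineProducts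

lemma sqrt_pi_mul_pow_div_Gamma_mul (t c : ℝ) (n : ℕ) :
    √π * (t ^ (2 * n) / Gamma (n + 1 / 2) * ((-(4 * c)⁻¹) ^ n / n.factorial)) =
      (-1) ^ n * t ^ (2 * n) / ((2 * n).factorial * c ^ n) := by
  have hpi : √π ≠ 0 := (sqrt_pos.2 pi_pos).ne'
  rw [Gamma_nat_add_half_eq_factorial, neg_pow, inv_pow, mul_pow]
  field_simp

theorem stmt14_general {R : Type*} [NormedRing R] [NormedAlgebra ℝ R] [CompleteSpace R] {m : ℕ}
    (hm : 1 ≤ m) (T : Fin (2 * m) → R) (G : ℝ → R)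
    (hG : ∀ s, G s = s ^ (2 * m - 1) •
      ∫ ω in Metric.closedBall (0 : EuclideanSpace ℝ (Fin (2 * m))) 1,
        ((1 - ‖ω‖ ^ 2) ^ (-(1 : ℝ) / 2)) • (List.ofFn fun i => cosSeries (s * ω i / √m) (T i)).prod)
    (F : ℝ → R) (hF : ∀ t, F t = (1 / (2 * π) ^ m) • deriv (Dop^[m - 1] G) t) {t : ℝ} (ht : t ≠ 0) :
    (Summable fun n : ℕ =>
      ‖((-1 : ℝ) ^ n * t ^ (2 * n) / ((2 * n).factorial * m ^ n)) • evenMultinomial T n‖) ∧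
    F t = ∑' n : ℕ,
      ((-1 : ℝ) ^ n * t ^ (2 * n) / ((2 * n).factorial * m ^ n)) • evenMultinomial T n := by
  have : NeZero (2 * m) := ⟨by omega⟩
  let v (n : ℕ) : R := ((-(4 * m : ℝ)⁻¹) ^ n / n.factorial) • evenMultinomial T n
  have hv : IsEntireSeries v := isEntireSeries_evenMultinomial _ T
  have hterm (n : ℕ) : √π • (t ^ (2 * n) / Gamma (n + 1 / 2)) • v n =
      ((-1 : ℝ) ^ n * t ^ (2 * n) / ((2 * n).factorial * m ^ n)) • evenMultinomial T n := by
    rw [smul_smul, smul_smul, mul_assoc, sqrt_pi_mul_pow_div_Gamma_mul]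
  have hGv : G = √π ^ (2 * m + 1) • besselSeries v (2 * (m - 1) + 1) := by
    ext s
    rw [hG, pow_smul_setIntegral_closedBall_prod_cosSeries T (by positivity),
      show 2 * m - 1 = 2 * (m - 1) + 1 by omega, Pi.smul_apply]
  have hconst : 1 / (2 * π) ^ m * (√π ^ (2 * m + 1) * 2 ^ m) = √π := by
    rw [pow_succ, pow_mul, sq_sqrt pi_pos.le, mul_pow]
    field_simp
  simp only [← hterm]
  refine ⟨?_, ?_⟩
  · simpa only [norm_smul, add_zero] using
      (hv.summable_norm_div_Gamma_smul one_half_pos t 0).mul_left ‖√π‖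
  · rw [hF, hGv, iterate_Dop_const_smul, deriv_const_smul_field,
      deriv_iterate_Dop_besselSeries hv _ ht, Nat.sub_add_cancel hm, smul_smul, smul_smul,
      mul_assoc, hconst, tsum_const_smul'']

theorem stmt14 {H : Type*} [NormedAddCommGroup H] [InnerProductSpace ℂ H] [CompleteSpace H]
    (A B : H →L[ℂ] H) (hA : IsSelfAdjoint A) (hB : IsSelfAdjoint B)
    (m : ℕ) (hm : 1 ≤ m)
    (G : ℝ → (H →L[ℂ] H))
    (hG : ∀ s : ℝ, G s = s ^ (2*m-1) •
      ∫ ω in Metric.closedBall (0 : EuclideanSpace ℝ (Fin (2*m))) 1,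
        ((1 - ‖ω‖^2) ^ (-(1:ℝ)/2)) •
          (List.ofFn (fun i : Fin (2*m) =>
            cosOp (s * ω i / Real.sqrt m) (if (i : ℕ) % 2 = 0 then A else B))).prod)
    (F : ℝ → (H →L[ℂ] H))
    (hF : ∀ t : ℝ, F t = (1 / (2*π)^m) • deriv (Dop^[m-1] G) t) :
    ∀ t ∈ Set.Ioi (0:ℝ),
      Summable (fun n : ℕ =>
        ‖(((-1:ℝ)^n * t^(2*n)) / ((Nat.factorial (2*n) : ℝ) * m^n)) •
          ∑ α ∈ Finset.Nat.antidiagonalTuple (2*m) n,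
            ((Nat.factorial n : ℝ) / (∏ i, (Nat.factorial (α i) : ℝ))) •
              (List.ofFn (fun i : Fin (2*m) =>
                (if (i : ℕ) % 2 = 0 then A else B) ^ (2 * α i))).prod‖) ∧
      F t = ∑' n : ℕ,
        (((-1:ℝ)^n * t^(2*n)) / ((Nat.factorial (2*n) : ℝ) * m^n)) •
          ∑ α ∈ Finset.Nat.antidiagonalTuple (2*m) n,
            ((Nat.factorial n : ℝ) / (∏ i, (Nat.factorial (α i) : ℝ))) •
              (List.ofFn (fun i : Fin (2*m) =>
                (if (i : ℕ) % 2 = 0 then A else B) ^ (2 * α i))).prod := by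
  exact fun t ht =>
    stmt14_general hm (fun i => if (i : ℕ) % 2 = 0 then A else B) G hG F hF (ne_of_gt ht)
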